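/- Let q be a power of 2. Then GL_2(F_q) has exactly q−1 irreducible complex characters of degree q, and each such character ψ whose character field ℚ(ψ) is not contained in ℝ has unitary discriminant (−1)^{q/2}·(q+1). -/

import Mathlib

open Matrix

noncomputable section

namespace Paper

/-- The character of a matrix representation. -/
def charOf {G : Type} [Group G] {n : ℕ} (ρ : G →* GL (Fin n) ℂ) : G → ℂ :=
  fun g => Matrix.trace ((ρ g : Matrix (Fin n) (Fin n) ℂ))

/-- Irreducibility of a complex matrix representation. -/
def IsIrredRep {G : Type} [Group G] {n : ℕ} (ρ : G →* GL (Fin n) ℂ) : Prop :=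
  0 < n ∧ ∀ W : Submodule ℂ (Fin n → ℂ),
    (∀ (g : G), ∀ v ∈ W, (ρ g : Matrix (Fin n) (Fin n) ℂ).mulVec v ∈ W) → W = ⊥ ∨ W = ⊤

/-- `χ` is an irreducible complex character of `G`. -/
def IsIrrChar {G : Type} [Group G] (χ : G → ℂ) : Prop :=
  ∃ (n : ℕ) (ρ : G →* GL (Fin n) ℂ), IsIrredRep ρ ∧ χ = charOf ρ

/-- The character field `ℚ(χ)`, as a subfield of `ℂ`. -/
def charField {G : Type} [Group G] (χ : G → ℂ) : Subfield ℂ :=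
  Subfield.closure (Set.range χ)

/-- The subfield of real numbers inside `ℂ`. -/
def realsIn : Subfield ℂ := Subfield.closure (Set.range ((↑) : ℝ → ℂ))

/-- The character field of `χ` is not contained in `ℝ`. -/
def NotReal {G : Type} [Group G] (χ : G → ℂ) : Prop := ¬ charField χ ≤ realsIn

/-- `χ` has unitary discriminant `d`. -/
def HasUnitaryDisc {G : Type} [Group G] (χ : G → ℂ) (d : ℂ) : Prop :=
  ∀ (n : ℕ) (ρ : G →* GL (Fin n) ℂ),
    χ = charOf ρ →
    (∀ g i j, ((ρ g : Matrix (Fin n) (Fin n) ℂ)) i j ∈ charField χ) →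
    ∀ H : Matrix (Fin n) (Fin n) ℂ,
      (∀ i j, H i j ∈ charField χ) →
      IsUnit H.det →
      H.conjTranspose = H →
      (∀ g, ((ρ g : Matrix (Fin n) (Fin n) ℂ)).conjTranspose * H *
        (ρ g : Matrix (Fin n) (Fin n) ℂ) = H) →
      ∃ z ∈ charField χ, z ≠ 0 ∧
        (-1 : ℂ) ^ (n * (n - 1) / 2) * H.det = d * (z * (starRingEnd ℂ) z)

/-- `χ` has orthogonal discriminant `d`. -/
def HasOrthDisc {G : Type} [Group G] (χ : G → ℂ) (d : ℂ) : Prop :=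
  ∀ (n : ℕ) (ρ : G →* GL (Fin n) ℂ),
    χ = charOf ρ →
    (∀ g i j, ((ρ g : Matrix (Fin n) (Fin n) ℂ)) i j ∈ charField χ) →
    ∀ H : Matrix (Fin n) (Fin n) ℂ,
      (∀ i j, H i j ∈ charField χ) →
      IsUnit H.det →
      H.transpose = H →
      (∀ g, ((ρ g : Matrix (Fin n) (Fin n) ℂ)).transpose * H *
        (ρ g : Matrix (Fin n) (Fin n) ℂ) = H) →
      ∃ z ∈ charField χ, z ≠ 0 ∧
        (-1 : ℂ) ^ (n * (n - 1) / 2) * H.det = d * z ^ 2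

/-- `χ` is a rational character. -/
def IsRationalChar {G : Type} [Group G] (χ : G → ℂ) : Prop :=
  ∀ g, ∃ r : ℚ, χ g = (r : ℂ)

/-- `χ` is the character of a representation over `ℚ`. -/
def RealizableOverQ {G : Type} [Group G] (χ : G → ℂ) : Prop :=
  ∃ (n : ℕ) (ρ : G →* GL (Fin n) ℂ), χ = charOf ρ ∧
    ∀ g i j, ∃ r : ℚ, ((ρ g : Matrix (Fin n) (Fin n) ℂ)) i j = (r : ℂ)

end Paper

/-!
Let `q = |F|` and let `U` be the group of upper unitriangular matrices. An irreducible
representation `V` of `GL₂(F)` of degree `q` has a `U`-fixed line: all nontrivial elements of `U`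
are conjugate involutions and not scalar (otherwise all of `GL₂(F)` would act through the torus, and
`dim V = 1`), so they share an integral trace `t` with `|t| < q`, and
`q + (q - 1) t = q · dim V^U` forces `t = 0` and `dim V^U = 1`. The torus acts on this line through
a character `mu`. Averaging over `U` shows that `mu (a, d)` is the character value at `diag (a, d)`
for `a ≠ d`, so `mu` is symmetric and hence of the form `lam ∘ det`. After twisting by `lam⁻¹`,
the line is fixed by the Borel subgroup, and its translates are indexed by the projective line, on
which `GL₂(F)` acts 2-transitively. These `q + 1` vectors have sum zero, like the vertices of a
centred simplex, and this determines the character. Evaluation at scalar matrices recovers `lam`,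
because every element of `F` is a square; this gives the count and puts the values of `lam` in the
character field.

By 2-transitivity the Gram matrix of the simplex with respect to an invariant Hermitian form is
`b (1 - (q + 1) δ)` for some `b` fixed by conjugation. Any `q` of the vectors form a basis, of Gram
determinant `b ^ q (q + 1) ^ (q - 1)`, which is `q + 1` modulo norms as `q` is even.
-/

namespace Paper

section Representation

open Module

variable {G k V : Type*} [Group G] [Field k] [AddCommGroup V] [Module k V]
  {R : Representation k G V}

lemma isIrreducible_iff :
    R.IsIrreducible ↔ Nontrivial V ∧
      ∀ W : Submodule k V, (∀ g, ∀ v ∈ W, R g v ∈ W) → W = ⊥ ∨ W = ⊤ := by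
  have toSubmodule_inj {A B : Subrepresentation R} : A.toSubmodule = B.toSubmodule → A = B :=
    fun h => Subrepresentation.toSubmodule_injective h
  constructor
  · intro hR
    refine ⟨?_, fun W hW => ?_⟩
    · by_contra hV
      have := not_nontrivial_iff_subsingleton.mp hV
      exact bot_ne_top (α := Subrepresentation R) (toSubmodule_inj (Subsingleton.elim _ _))
    · rcases hR.eq_bot_or_eq_top ⟨W, fun g v hv => hW g v hv⟩ with h | h
      · exact .inl (congrArg Subrepresentation.toSubmodule h)
      · exact .inr (congrArg Subrepresentation.toSubmodule h)
  · rintro ⟨hV, h⟩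
    have hne : (⊥ : Subrepresentation R) ≠ ⊤ := fun hbt =>
      bot_ne_top (α := Submodule k V) (congrArg Subrepresentation.toSubmodule hbt)
    exact
      { exists_pair_ne := ⟨_, _, hne⟩
        eq_bot_or_eq_top := fun A =>
          (h A.toSubmodule fun g _ hv => A.apply_mem_toSubmodule g hv).imp
            (fun hA => toSubmodule_inj hA) (fun hA => toSubmodule_inj hA) }

lemma isIrreducible_of_equiv {V' : Type*} [AddCommGroup V'] [Module k V']
    {R' : Representation k G V'} (e : R.Equiv R') (hR : R.IsIrreducible) : R'.IsIrreducible := by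
  rw [isIrreducible_iff] at hR ⊢
  obtain ⟨hV, hR⟩ := hR
  refine ⟨e.toLinearEquiv.symm.toEquiv.nontrivial, fun W hW => ?_⟩
  have he (g : G) (v : V) : e.toLinearEquiv (R g v) = R' g (e.toLinearEquiv v) :=
    LinearMap.congr_fun (e.toIntertwiningMap.isIntertwining' g) v
  have hmap : (W.comap e.toLinearEquiv.toLinearMap).map e.toLinearEquiv.toLinearMap = W :=
    Submodule.map_comap_eq_of_surjective e.toLinearEquiv.surjective W
  rcases hR (W.comap e.toLinearEquiv.toLinearMap) fun g v hv => by
    change e.toLinearEquiv (R g v) ∈ W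
    exact he g v ▸ hW g _ hv with h | h
  · exact .inl (by rw [← hmap, h, Submodule.map_bot])
  · exact .inr (by rw [← hmap, h, Submodule.map_top, LinearEquiv.range])

/-- The twist `lam ⊗ R` of a representation `R` by a linear character `lam`. -/
def twist (lam : G →* kˣ) (R : Representation k G V) : Representation k G V where
  toFun g := (lam g : k) • R g
  map_one' := by simp
  map_mul' g h := by rw [smul_mul_smul_comm, map_mul, map_mul, Units.val_mul]

@[simp]
lemma twist_apply (lam : G →* kˣ) (g : G) (v : V) :
    twist lam R g v = (lam g : k) • R g v := rfl

lemma character_twist (lam : G →* kˣ) (g : G) :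
    (twist lam R).character g = (lam g : k) * R.character g := by
  simp [Representation.character, twist]

lemma isIrreducible_twist (lam : G →* kˣ) (hR : R.IsIrreducible) :
    (twist lam R).IsIrreducible := by
  rw [isIrreducible_iff] at hR ⊢
  refine ⟨hR.1, fun W hW => hR.2 W fun g v hv => ?_⟩
  rw [← inv_smul_smul (lam g) (R g v)]
  exact W.smul_mem _ (hW g v hv)

lemma finrank_eq_one_of_apply_mem_span (hR : R.IsIrreducible) {v : V} (hv : v ≠ 0)
    (h : ∀ g, R g v ∈ k ∙ v) : finrank k V = 1 := by
  have hspan : k ∙ v = ⊤ := ((isIrreducible_iff.mp hR).2 (k ∙ v) fun g u hu => by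
    obtain ⟨c, rfl⟩ := Submodule.mem_span_singleton.mp hu
    rw [map_smul]
    exact Submodule.smul_mem _ c (h g)).resolve_left (by simpa using hv)
  rw [← finrank_top, ← hspan, finrank_span_singleton hv]

lemma invariants_eq_bot (hR : R.IsIrreducible) (h1 : finrank k V ≠ 1) : R.invariants = ⊥ := by
  by_contra hne
  obtain ⟨v, hv, hv0⟩ := Submodule.exists_mem_ne_zero_of_ne_bot hne
  refine h1 (finrank_eq_one_of_apply_mem_span hR hv0 fun g => ?_)
  rw [hv g]
  exact Submodule.mem_span_singleton_self v

lemma exists_monoidHom_apply_eq_smul {v : V} (hv : v ≠ 0) (h : ∀ g, R g v ∈ k ∙ v) :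
    ∃ mu : G →* kˣ, ∀ g, R g v = (mu g : k) • v := by
  choose c hc using fun g => Submodule.mem_span_singleton.mp (h g)
  have hinj := smul_left_injective k hv
  let mu : G →* k :=
    { toFun := c
      map_one' := hinj (by simp [hc])
      map_mul' g g' := hinj (by
        simp only [hc, map_mul, Module.End.mul_apply]
        rw [← hc g', map_smul, ← hc g, smul_smul, mul_comm]) }
  exact ⟨mu.toHomUnits, fun g => (hc g).symm⟩

end Representation

section MatrixRep

open Module

variable {G : Type} [Group G]

/-- A matrix representation, viewed as a representation on column vectors. -/
def matrixRep {n : ℕ} (ρ : G →* GL (Fin n) ℂ) : Representation ℂ G (Fin n → ℂ) :=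
  (Matrix.toLinAlgEquiv' : Matrix (Fin n) (Fin n) ℂ ≃ₐ[ℂ] _).toMonoidHom.comp
    ((Units.coeHom _).comp ρ)

@[simp]
lemma matrixRep_apply {n : ℕ} (ρ : G →* GL (Fin n) ℂ) (g : G) (v : Fin n → ℂ) :
    matrixRep ρ g v = (ρ g : Matrix (Fin n) (Fin n) ℂ) *ᵥ v := rfl

lemma charOf_eq_character {n : ℕ} (ρ : G →* GL (Fin n) ℂ) :
    charOf ρ = (matrixRep ρ).character :=
  funext fun g => (Matrix.trace_toLin'_eq (ρ g : Matrix (Fin n) (Fin n) ℂ)).symm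

lemma isIrredRep_iff {n : ℕ} (ρ : G →* GL (Fin n) ℂ) :
    IsIrredRep ρ ↔ (matrixRep ρ).IsIrreducible := by
  rw [isIrreducible_iff, IsIrredRep]
  refine and_congr ⟨fun hn => ?_, fun _ => Nat.pos_of_ne_zero ?_⟩ Iff.rfl
  · have : NeZero n := ⟨hn.ne'⟩
    infer_instance
  · rintro rfl
    exact not_nontrivial (Fin 0 → ℂ) ‹_›

theorem isIrrChar_character {V : Type*} [AddCommGroup V] [Module ℂ V] [FiniteDimensional ℂ V]
    {R : Representation ℂ G V} (hR : R.IsIrreducible) : IsIrrChar R.character := by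
  let b := finBasis ℂ V
  let ρ : G →* GL (Fin (finrank ℂ V)) ℂ :=
    (Units.map (LinearMap.toMatrixAlgEquiv b).toMonoidHom).comp R.toHomUnits
  let e : R.Equiv (matrixRep ρ) := .mk b.equivFun fun g => LinearMap.ext fun v =>
    (LinearMap.toMatrix_mulVec_repr b b (R g) v).symm
  refine ⟨finrank ℂ V, ρ, (isIrredRep_iff ρ).mpr (isIrreducible_of_equiv e hR), ?_⟩
  rw [charOf_eq_character, Representation.char_iso e]

end MatrixRep

section SimplexSystem

lemma sum_eq_add_sum_subtype_ne {X M : Type*} [AddCommMonoid M] [Fintype X] [DecidableEq X]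
    (f : X → M) (x₀ : X) : ∑ x, f x = f x₀ + ∑ x : {x // x ≠ x₀}, f x := by
  rw [← Finset.add_sum_erase _ _ (Finset.mem_univ x₀)]
  congr 1
  exact Finset.sum_subtype _ (by simp) _

open Module MulAction Submodule

variable {G X k V : Type*} [Group G] [MulAction G X] [Field k]
  [AddCommGroup V] [Module k V] {R : Representation k G V} {w : X → V}

lemma sum_stabilizer_smul_eq [IsMultiplyPretransitive G X 2] {y p p' : X}
    [Fintype (stabilizer G y)] (w : X → V) (hp : p ≠ y) (hp' : p' ≠ y) :
    ∑ s : stabilizer G y, w (s • p) = ∑ s : stabilizer G y, w (s • p') := by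
  obtain ⟨g, hgy, hgp⟩ := is_two_pretransitive_iff.mp ‹_› hp'.symm hp.symm
  refine Fintype.sum_equiv (Equiv.mulRight (⟨g, hgy⟩ : stabilizer G y)) _ _ fun s => ?_
  rw [← hgp, Equiv.coe_mulRight, mul_smul]
  rfl

/-- A simplex system for a representation of `G` and a `G`-set `X`: an equivariant family of
vectors indexed by `X` with sum zero, like the vertices of a simplex centred at the origin. -/
structure IsSimplexSystem [Fintype X] (R : Representation k G V) (w : X → V) : Prop where
  apply_eq : ∀ g x, R g (w x) = w (g • x)
  sum_eq_zero : ∑ x, w x = 0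

namespace IsSimplexSystem

variable [Fintype X]

lemma card_sub_one_smul_sum_stabilizer [IsMultiplyPretransitive G X 2] [DecidableEq X]
    (hw : IsSimplexSystem R w) (y p : X) [Fintype (stabilizer G y)] :
    ((Fintype.card X : k) - 1) • ∑ s : stabilizer G y, w (s • p) =
      ((Fintype.card (stabilizer G y) : k) * (Fintype.card X * (if p = y then 1 else 0) - 1)) •
        w y := by
  set F : X → V := fun p => ∑ s : stabilizer G y, w (s • p) with hF
  have hFy : F y = (Fintype.card (stabilizer G y) : k) • w y := by
    simp only [hF, fun s : stabilizer G y => (show s • y = y from s.2), Finset.sum_const,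
      Finset.card_univ, Nat.cast_smul_eq_nsmul]
  change _ • F p = _
  obtain rfl | hp := eq_or_ne p y
  · rw [hFy, if_pos rfl, smul_smul]
    congr 1
    ring
  have hsum : F y + ((Fintype.card X : k) - 1) • F p = 0 := calc
    F y + ((Fintype.card X : k) - 1) • F p = F y + ∑ x ∈ Finset.univ.erase y, F x := by
      rw [Finset.sum_congr rfl fun x hx => sum_stabilizer_smul_eq w (Finset.ne_of_mem_erase hx) hp,
        Finset.sum_const, Finset.card_erase_of_mem (Finset.mem_univ y), Finset.card_univ,
        ← Nat.cast_smul_eq_nsmul k, Nat.cast_pred (Fintype.card_pos_iff.mpr ⟨y⟩)]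
    _ = ∑ x, F x := Finset.add_sum_erase _ _ (Finset.mem_univ y)
    _ = ∑ s : stabilizer G y, ∑ x, w (s • x) := Finset.sum_comm
    _ = 0 := Finset.sum_eq_zero fun s _ =>
      (Equiv.sum_comp (MulAction.toPerm (s : G)) w).trans hw.sum_eq_zero
  rw [eq_neg_of_add_eq_zero_right hsum, hFy, if_neg hp, ← neg_smul]
  congr 1
  ring

theorem smul_mem [Finite G] [CharZero k] [IsMultiplyPretransitive G X 2]
    (hw : IsSimplexSystem R w) {W : Submodule k V} (hW : ∀ g, ∀ v ∈ W, R g v ∈ W) {c : X → k}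
    (hc : ∑ p, c p • w p ∈ W) (y : X) : (Fintype.card X * c y - ∑ p, c p) • w y ∈ W := by
  classical
  have := Fintype.ofFinite (stabilizer G y)
  have hmem : ∑ s : stabilizer G y, R (s : G) (∑ p, c p • w p) ∈ W :=
    Submodule.sum_mem _ fun s _ => hW _ _ hc
  have key : ((Fintype.card X : k) - 1) • ∑ s : stabilizer G y, R (s : G) (∑ p, c p • w p) =
      (Fintype.card (stabilizer G y) : k) • (Fintype.card X * c y - ∑ p, c p) • w y := calc
    _ = ∑ p, c p • ((Fintype.card X : k) - 1) • ∑ s : stabilizer G y, w (s • p) := by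
      simp only [map_sum, map_smul, hw.apply_eq]
      rw [Finset.sum_comm, Finset.smul_sum]
      refine Finset.sum_congr rfl fun p _ => ?_
      rw [← Finset.smul_sum, smul_comm]
      rfl
    _ = (∑ p, (Fintype.card (stabilizer G y) : k) *
          (Fintype.card X * (if p = y then c p else 0) - c p)) • w y := by
      rw [Finset.sum_smul]
      refine Finset.sum_congr rfl fun p _ => ?_
      rw [hw.card_sub_one_smul_sum_stabilizer, smul_smul]
      congr 1
      split_ifs <;> ring
    _ = _ := by
      rw [← Finset.mul_sum, Finset.sum_sub_distrib, ← Finset.mul_sum, Finset.sum_ite_eq',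
        if_pos (Finset.mem_univ y), mul_smul]
  have hS : (Fintype.card (stabilizer G y) : k) ≠ 0 := Nat.cast_ne_zero.mpr Fintype.card_ne_zero
  exact (W.smul_mem_iff hS).mp (key ▸ W.smul_mem _ hmem)

lemma apply_ne_zero [IsPretransitive G X] (hw : IsSimplexSystem R w) (h0 : w ≠ 0) (x : X) :
    w x ≠ 0 := by
  contrapose! h0
  funext y
  obtain ⟨g, rfl⟩ := exists_smul_eq G x y
  rw [← hw.apply_eq, h0, map_zero, Pi.zero_apply]

/-- The subrepresentation spanned by a simplex system. -/
def spanSubrep (hw : IsSimplexSystem R w) : Subrepresentation R where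
  toSubmodule := span k (Set.range w)
  apply_mem_toSubmodule g v hv := by
    rw [← mem_comap]
    refine span_le.mpr ?_ hv
    rintro _ ⟨x, rfl⟩
    exact subset_span ⟨g • x, (hw.apply_eq g x).symm⟩

lemma span_range_eq_top (hw : IsSimplexSystem R w) (h0 : w ≠ 0) (hR : R.IsIrreducible) :
    span k (Set.range w) = ⊤ :=
  ((isIrreducible_iff.mp hR).2 _ hw.spanSubrep.apply_mem_toSubmodule).resolve_left
    fun hbot => h0 (funext fun x => span_eq_bot.mp hbot _ ⟨x, rfl⟩)

/-- A simplex system, as a family of vectors of its span. -/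
def toSpan (hw : IsSimplexSystem R w) (x : X) : hw.spanSubrep.toSubmodule :=
  ⟨w x, subset_span ⟨x, rfl⟩⟩

lemma isSimplexSystem_toSpan (hw : IsSimplexSystem R w) :
    IsSimplexSystem hw.spanSubrep.toRepresentation hw.toSpan where
  apply_eq g x := Subtype.ext (hw.apply_eq g x)
  sum_eq_zero := Subtype.ext <| (AddSubmonoidClass.coe_finsetSum _ _).trans hw.sum_eq_zero

lemma span_range_toSpan (hw : IsSimplexSystem R w) : span k (Set.range hw.toSpan) = ⊤ := by
  refine map_injective_of_injective hw.spanSubrep.toSubmodule.injective_subtype ?_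
  rw [map_span, ← Set.range_comp, map_subtype_top]
  rfl

lemma apply_eq_neg_sum [DecidableEq X] (hw : IsSimplexSystem R w) (x₀ : X) :
    w x₀ = -∑ x : {x // x ≠ x₀}, w x :=
  eq_neg_of_add_eq_zero_left ((sum_eq_add_sum_subtype_ne w x₀).symm.trans hw.sum_eq_zero)

section CharZero

variable [Finite G] [CharZero k] [IsMultiplyPretransitive G X 2]

lemma coeff_eq (hw : IsSimplexSystem R w) (h0 : w ≠ 0) {c : X → k}
    (hc : ∑ p, c p • w p = 0) (y : X) : Fintype.card X * c y = ∑ p, c p := by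
  have := isPretransitive_of_is_two_pretransitive (G := G) (α := X)
  have hmem := hw.smul_mem (W := ⊥) (fun g v hv => by simp_all) (hc ▸ Submodule.zero_mem _) y
  exact sub_eq_zero.mp ((smul_eq_zero.mp hmem).resolve_right (hw.apply_ne_zero h0 y))

theorem linearIndependent (hw : IsSimplexSystem R w) (h0 : w ≠ 0) (x₀ : X) :
    LinearIndependent k fun x : {x // x ≠ x₀} => w x := by
  classical
  rw [Fintype.linearIndependent_iff]
  intro c hc x
  let c' : X → k := fun y => if hy : y ≠ x₀ then c ⟨y, hy⟩ else 0
  have hc' : ∑ p, c' p • w p = 0 := by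
    rw [sum_eq_add_sum_subtype_ne _ x₀, ← hc]
    simp only [c', ne_eq, not_true_eq_false, dite_false, zero_smul, zero_add]
    exact Finset.sum_congr rfl fun y _ => by simp [y.2]
  have hcard : (Fintype.card X : k) ≠ 0 :=
    Nat.cast_ne_zero.mpr (Fintype.card_pos_iff.mpr ⟨x₀⟩).ne'
  have := mul_left_cancel₀ hcard ((hw.coeff_eq h0 hc' x).trans (hw.coeff_eq h0 hc' x₀).symm)
  simpa [c', x.2] using this

theorem isIrreducible (hw : IsSimplexSystem R w) (h0 : w ≠ 0)
    (hspan : span k (Set.range w) = ⊤) : R.IsIrreducible := by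
  have := isPretransitive_of_is_two_pretransitive (G := G) (α := X)
  rw [isIrreducible_iff]
  obtain ⟨x₀, hx₀⟩ := Function.ne_iff.mp h0
  refine ⟨⟨_, _, hx₀⟩, fun W hW => or_iff_not_imp_left.mpr fun hbot => ?_⟩
  obtain ⟨v, hvW, hv0⟩ := Submodule.exists_mem_ne_zero_of_ne_bot hbot
  obtain ⟨c, rfl⟩ := (Submodule.mem_span_range_iff_exists_fun k).mp (hspan ▸ mem_top (x := v))
  have hcard : (Fintype.card X : k) ≠ 0 :=
    Nat.cast_ne_zero.mpr (Fintype.card_pos_iff.mpr ⟨x₀⟩).ne'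
  obtain ⟨y, hy⟩ : ∃ y, Fintype.card X * c y - ∑ p, c p ≠ 0 := by
    by_contra! hconst
    refine hv0 ((smul_eq_zero.mp ?_).resolve_left hcard)
    rw [Finset.smul_sum]
    simp only [smul_smul, sub_eq_zero.mp (hconst _), ← Finset.smul_sum, hw.sum_eq_zero, smul_zero]
  have hwy : w y ∈ W := (W.smul_mem_iff hy).mp (hw.smul_mem hW hvW y)
  rw [eq_top_iff, ← hspan, span_le]
  rintro _ ⟨x, rfl⟩
  obtain ⟨g, rfl⟩ := exists_smul_eq G y x
  exact hw.apply_eq g y ▸ hW g _ hwy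

/-- The basis of the ambient space formed by all vectors of a simplex system but one. -/
def basis (hw : IsSimplexSystem R w) (h0 : w ≠ 0) (hspan : span k (Set.range w) = ⊤) (x₀ : X) :
    Basis {x // x ≠ x₀} k V := by
  classical
  refine Basis.mk (hw.linearIndependent h0 x₀) (hspan ▸ span_le.mpr ?_)
  rintro _ ⟨x, rfl⟩
  obtain rfl | hx := eq_or_ne x x₀
  · rw [hw.apply_eq_neg_sum x]
    exact neg_mem (sum_mem fun y _ => subset_span ⟨y, rfl⟩)
  · exact subset_span ⟨⟨x, hx⟩, rfl⟩

lemma basis_apply (hw : IsSimplexSystem R w) (h0 : w ≠ 0) (hspan : span k (Set.range w) = ⊤)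
    (x₀ : X) (x : {x // x ≠ x₀}) : hw.basis h0 hspan x₀ x = w x :=
  Basis.mk_apply ..

lemma basis_repr_apply [DecidableEq X] (hw : IsSimplexSystem R w) (h0 : w ≠ 0)
    (hspan : span k (Set.range w) = ⊤) (x₀ y : X) (x : {x // x ≠ x₀}) :
    (hw.basis h0 hspan x₀).repr (w y) x = (if y = x then 1 else 0) - if y = x₀ then 1 else 0 := by
  obtain rfl | hy := eq_or_ne y x₀
  · rw [hw.apply_eq_neg_sum y]
    simp only [← hw.basis_apply h0 hspan]
    simp [Finsupp.single_apply, x.2.symm]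
  · rw [← hw.basis_apply h0 hspan x₀ ⟨y, hy⟩]
    simp [Finsupp.single_apply, hy, Subtype.ext_iff]

theorem character_eq (hw : IsSimplexSystem R w) (h0 : w ≠ 0)
    (hspan : span k (Set.range w) = ⊤) (g : G) :
    R.character g = Nat.card (fixedBy X g) - 1 := by
  classical
  obtain ⟨x₀, -⟩ := Function.ne_iff.mp h0
  have hfix : ∑ x : X, (if g • x = x then (1 : k) else 0) = Nat.card (fixedBy X g) := by
    rw [Finset.sum_boole]
    exact congrArg Nat.cast (Nat.subtype_card (p := (· ∈ fixedBy X g)) _ (by simp)).symm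
  have hone : ∑ x : X, (if g • x = x₀ then (1 : k) else 0) = 1 := by
    simp [← eq_inv_smul_iff]
  calc R.character g
      = ∑ x : {x // x ≠ x₀}, (((if g • (x : X) = x then 1 else 0) : k) -
          if g • (x : X) = x₀ then 1 else 0) := by
        rw [Representation.character, LinearMap.trace_eq_matrix_trace k (hw.basis h0 hspan x₀),
          Matrix.trace]
        refine Finset.sum_congr rfl fun x _ => ?_
        rw [Matrix.diag_apply, LinearMap.toMatrix_apply, hw.basis_apply, hw.apply_eq,
          hw.basis_repr_apply]
    _ = ∑ x : X, (((if g • x = x then 1 else 0) : k) - if g • x = x₀ then 1 else 0) := by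
        refine ((sum_eq_add_sum_subtype_ne _ x₀).trans ?_).symm
        rw [sub_self, zero_add]
    _ = Nat.card (fixedBy X g) - 1 := by
        rw [Finset.sum_sub_distrib, hfix, hone]

end CharZero
end IsSimplexSystem
end SimplexSystem

section OrbitSum

open Module MulAction

variable {G X k V : Type*} [Group G] [Fintype G] [MulAction G X] [DecidableEq X] [Field k]
  [AddCommGroup V] [Module k V] {R : Representation k G V}

/-- The sum of the translates `R g v` over all `g` carrying the base point `x₀` to `x`; as `x`
varies these vectors form an equivariant family. -/
def orbitSum (R : Representation k G V) (x₀ : X) (v : V) (x : X) : V :=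
  ∑ g with g • x₀ = x, R g v

lemma isSimplexSystem_orbitSum [Fintype X] (hR : R.invariants = ⊥) (x₀ : X) (v : V) :
    IsSimplexSystem R (orbitSum R x₀ v) where
  apply_eq g x := by
    rw [orbitSum, map_sum]
    refine Finset.sum_equiv (Equiv.mulLeft g) (fun h => ?_) fun h _ => ?_
    · simp [mul_smul]
    · simp
  sum_eq_zero := by
    simp only [orbitSum, Finset.sum_fiberwise]
    rw [← Submodule.mem_bot k, ← hR]
    intro g
    rw [map_sum]
    exact Fintype.sum_equiv (Equiv.mulLeft g) _ _ fun h => by simp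

lemma orbitSum_self {x₀ : X} {v : V} (hv : ∀ g : G, g • x₀ = x₀ → R g v = v) :
    orbitSum R x₀ v x₀ = (Nat.card (stabilizer G x₀) : k) • v := by
  rw [orbitSum, Finset.sum_congr rfl fun g hg => hv g (Finset.mem_filter.mp hg).2,
    Finset.sum_const, ← Nat.cast_smul_eq_nsmul k,
    ← Nat.subtype_card (p := (· ∈ stabilizer G x₀)) _ (by simp)]

end OrbitSum

section DeletedChar

open Module MulAction

section Field

variable {G X k V : Type*} [Group G] [Finite G] [MulAction G X] [Finite X] [Field k] [CharZero k]
  [AddCommGroup V] [Module k V] {R : Representation k G V}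

theorem character_eq_of_apply_eq_self [IsMultiplyPretransitive G X 2] (hR : R.IsIrreducible)
    (hinv : R.invariants = ⊥) {x₀ : X} {v : V} (hv0 : v ≠ 0)
    (hv : ∀ g : G, g • x₀ = x₀ → R g v = v) (g : G) :
    R.character g = Nat.card (fixedBy X g) - 1 := by
  classical
  have := Fintype.ofFinite G
  have := Fintype.ofFinite X
  have hw := isSimplexSystem_orbitSum hinv x₀ v
  have h0 : orbitSum R x₀ v ≠ 0 := Function.ne_iff.mpr ⟨x₀, by
    rw [orbitSum_self hv]
    exact smul_ne_zero (Nat.cast_ne_zero.mpr Nat.card_pos.ne') hv0⟩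
  exact hw.character_eq h0 (hw.span_range_eq_top h0 hR) g

theorem invariants_eq_bot_of_character_eq [FiniteDimensional k V] [IsPretransitive G X] [Nonempty X]
    (hR : ∀ g, R.character g = Nat.card (fixedBy X g) - 1) : R.invariants = ⊥ := by
  classical
  have := Fintype.ofFinite G
  have := Fintype.ofFinite X
  have hG : (Nat.card G : k) ≠ 0 := Nat.cast_ne_zero.mpr Nat.card_pos.ne'
  have := invertibleOfNonzero hG
  have horb : Fintype.card (orbitRel.Quotient G X) = 1 :=
    Fintype.card_eq_one_iff_nonempty_unique.mpr
      ⟨((pretransitive_iff_unique_quotient_of_nonempty G X).mp ‹_›).some⟩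
  have burnside : ∑ g : G, Nat.card (fixedBy X g) = Nat.card G := by
    simpa only [horb, one_mul, Nat.card_eq_fintype_card] using
      sum_card_fixedBy_eq_card_orbits_mul_card_group G X
  have hfin := R.card_inv_mul_sum_char_eq_finrank
  simp only [hR, Finset.sum_sub_distrib, ← Nat.cast_sum, burnside] at hfin
  rw [Finset.sum_const, Finset.card_univ, ← Nat.card_eq_fintype_card, nsmul_one, sub_self,
    mul_zero] at hfin
  exact Submodule.finrank_eq_zero.mp (Nat.cast_eq_zero.mp hfin.symm)

end Field

theorem exists_orbitSum_ne_zero {G X k V ι : Type*} [Group G] [Fintype G] [MulAction G X]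
    [Finite X] [Nontrivial X] [DecidableEq X] [Field k] [CharZero k] [AddCommGroup V] [Module k V]
    [Finite ι] {R : Representation k G V} (b : Basis ι k V)
    (hR : ∀ g, R.character g = Nat.card (fixedBy X g) - 1) (x₀ : X) :
    ∃ j, orbitSum R x₀ (b j) ≠ 0 := by
  classical
  have := Fintype.ofFinite ι
  by_contra! h0
  have htrace : ∑ g : G with g • x₀ = x₀, R.character g = 0 := by
    simp only [Representation.character, LinearMap.trace_eq_matrix_trace k b, Matrix.trace,
      Matrix.diag_apply, LinearMap.toMatrix_apply]
    rw [Finset.sum_comm]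
    refine Finset.sum_eq_zero fun j _ => ?_
    have := DFunLike.congr_fun (congrArg b.repr (congrFun (h0 j) x₀)) j
    simpa [orbitSum, map_sum, Finsupp.finsetSum_apply] using this
  have hfix : ∀ g ∈ ({g | g • x₀ = x₀} : Finset G), 1 ≤ Nat.card (fixedBy X g) := by
    intro g hg
    have : Nonempty (fixedBy X g) := ⟨⟨x₀, (Finset.mem_filter.mp hg).2⟩⟩
    exact Nat.card_pos
  have hsum : ∑ g : G with g • x₀ = x₀, (Nat.card (fixedBy X g) - 1) = 0 := by
    rw [← Nat.cast_eq_zero (R := k), Nat.cast_sum, ← htrace]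
    exact Finset.sum_congr rfl fun g hg => by rw [hR, Nat.cast_pred (hfix g hg)]
  have hone := Finset.sum_eq_zero_iff.mp hsum 1 (by simp)
  rw [fixedBy_one_eq_univ, Nat.card_univ] at hone
  have := Finite.one_lt_card (α := X)
  omega

variable {G X : Type*} [Group G] [MulAction G X]

/-- The product of a linear character `lam` with the deleted permutation character
`g ↦ |Fix g| - 1` of a `G`-set `X`. -/
def deletedChar (X : Type*) [MulAction G X] (lam : G →* ℂˣ) (g : G) : ℂ :=
  lam g * (Nat.card (fixedBy X g) - 1)

lemma deletedChar_of_forall_smul_eq (lam : G →* ℂˣ) {g : G} (hg : ∀ x : X, g • x = x) :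
    deletedChar X lam g = lam g * (Nat.card X - 1) := by
  rw [deletedChar, Set.eq_univ_of_forall (s := fixedBy X g) hg, Nat.card_univ]

lemma deletedChar_one (lam : G →* ℂˣ) : deletedChar X lam 1 = Nat.card X - 1 := by
  rw [deletedChar_of_forall_smul_eq lam (one_smul G), map_one, Units.val_one, one_mul]

/-- The vertices of the standard simplex in `ℂ[X]`, centred at the origin and scaled by `|X|` in
order to avoid denominators. -/
def centredSingle [Fintype X] (x : X) : MonoidAlgebra ℂ X :=
  (Fintype.card X : ℂ) • .single x 1 - ∑ y, .single y 1

lemma isSimplexSystem_centredSingle [Fintype X] :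
    IsSimplexSystem (Representation.ofMulAction ℂ G X) centredSingle where
  apply_eq g x := by
    simp only [centredSingle, map_sub, map_smul, map_sum, Representation.ofMulAction_single]
    congr 1
    exact Equiv.sum_comp (MulAction.toPerm g) fun y => (.single y 1 : MonoidAlgebra ℂ X)
  sum_eq_zero := by
    simp only [centredSingle]
    rw [Finset.sum_sub_distrib, ← Finset.smul_sum, Finset.sum_const, Finset.card_univ,
      Nat.cast_smul_eq_nsmul, sub_self]

lemma centredSingle_ne_zero [Fintype X] [Nontrivial X] (x : X) : centredSingle x ≠ 0 := by
  classical
  obtain ⟨y, hxy⟩ := exists_ne x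
  intro h
  have := congrArg (fun v : MonoidAlgebra ℂ X => v.coeff y) h
  simp [centredSingle, hxy.symm] at this

theorem isIrrChar_deletedChar {G : Type} [Group G] [Finite G] [MulAction G X] [Finite X]
    [Nontrivial X] [IsMultiplyPretransitive G X 2] (lam : G →* ℂˣ) :
    IsIrrChar (deletedChar X lam) := by
  have := Fintype.ofFinite X
  have hw := isSimplexSystem_centredSingle (G := G) (X := X)
  have hs := hw.isSimplexSystem_toSpan
  have h0 : hw.toSpan ≠ 0 := fun h =>
    centredSingle_ne_zero (Classical.arbitrary X) (congrArg Subtype.val (congrFun h _))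
  have hirr := isIrreducible_twist lam (hs.isIrreducible h0 hw.span_range_toSpan)
  have : FiniteDimensional ℂ hw.spanSubrep.toSubmodule :=
    FiniteDimensional.span_of_finite ℂ (Set.finite_range _)
  have hχ : deletedChar X lam = (twist lam hw.spanSubrep.toRepresentation).character :=
    funext fun g => by
      rw [character_twist, hs.character_eq h0 hw.span_range_toSpan, deletedChar]
  exact hχ ▸ isIrrChar_character hirr

end DeletedChar

section UnitaryDiscriminant

open Module MulAction

lemma exists_eq_mul_of_smul_invariant {G X k : Type*} [Group G] [MulAction G X] [Fintype X]
    [DecidableEq X] [Nontrivial X] [IsMultiplyPretransitive G X 2] [CommRing k] {Γ : X → X → k}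
    (hΓ : ∀ (g : G) x y, Γ (g • x) (g • y) = Γ x y) (hsum : ∀ x, ∑ y, Γ x y = 0) :
    ∃ x₀ y₀, ∀ x y, Γ x y = Γ x₀ y₀ * (1 - if x = y then (Fintype.card X : k) else 0) := by
  obtain ⟨x₀, y₀, hne⟩ := exists_pair_ne X
  have hoff {x y : X} (hxy : x ≠ y) : Γ x y = Γ x₀ y₀ := by
    obtain ⟨g, rfl, rfl⟩ := is_two_pretransitive_iff.mp ‹IsMultiplyPretransitive G X 2› hne hxy
    exact hΓ g x₀ y₀
  refine ⟨x₀, y₀, fun x y => ?_⟩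
  obtain rfl | hxy := eq_or_ne x y
  · have hx := hsum x
    rw [← Finset.add_sum_erase _ _ (Finset.mem_univ x),
      Finset.sum_congr rfl fun y hy => hoff (Finset.ne_of_mem_erase hy).symm, Finset.sum_const,
      Finset.card_erase_of_mem (Finset.mem_univ x), Finset.card_univ, nsmul_eq_mul,
      Nat.cast_pred (Fintype.card_pos_iff.mpr ⟨x⟩)] at hx
    rw [if_pos rfl]
    linear_combination hx
  · rw [hoff hxy, if_neg hxy, sub_zero, mul_one]

lemma mul_det_one_sub_diagonal {ι k : Type*} [Fintype ι] [DecidableEq ι] [Field k] {c : k}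
    (hc : c ≠ 0) :
    c * (of fun i j : ι => 1 - if i = j then c else 0).det =
      (-c) ^ Fintype.card ι * (c - Fintype.card ι) := by
  have hfactor : (of fun i j : ι => 1 - if i = j then c else 0) =
      (-c) • (1 + replicateCol Unit (fun _ => -c⁻¹) * replicateRow Unit fun _ => (1 : k)) := by
    ext i j
    rw [Matrix.smul_apply, Matrix.add_apply, one_apply, mul_apply, of_apply, smul_eq_mul]
    simp only [replicateCol_apply, replicateRow_apply, Finset.univ_unique, Finset.sum_singleton]
    split_ifs
    · field_simp
      ring
    · field_simp
      ring
  rw [hfactor, det_smul, det_one_add_replicateCol_mul_replicateRow]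
  simp only [dotProduct, one_mul, Finset.sum_const, Finset.card_univ, nsmul_eq_mul]
  field_simp
  ring

lemma det_mem {ι : Type*} [Fintype ι] [DecidableEq ι] {k : Type*} [Field k] {L : Subfield k}
    {P : Matrix ι ι k} (hP : ∀ i j, P i j ∈ L) : P.det ∈ L := by
  rw [det_apply]
  refine sum_mem fun s _ => ?_
  rw [Units.smul_def]
  exact zsmul_mem (prod_mem fun i _ => hP _ _) _

open scoped ComplexConjugate

lemma conj_apply_eq_inv {G : Type*} [Group G] [Finite G] (lam : G →* ℂˣ) (g : G) :
    conj (lam g : ℂ) = (lam g : ℂ)⁻¹ := by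
  have hpow : (lam g : ℂ) ^ Nat.card G = 1 := by
    rw [← Units.val_pow_eq_pow_val, ← map_pow, pow_card_eq_one', map_one, Units.val_one]
  exact (Complex.inv_eq_conj (Complex.norm_eq_one_of_pow_eq_one hpow Nat.card_pos.ne')).symm

lemma conj_mem_charField {G : Type} [Group G] {χ : G → ℂ} (hχ : ∀ g, conj (χ g) = χ g⁻¹) {z : ℂ}
    (hz : z ∈ charField χ) : conj z ∈ charField χ := by
  have hle : charField χ ≤ (charField χ).comap (starRingEnd ℂ) := by
    refine Subfield.closure_le.mpr ?_
    rintro _ ⟨g, rfl⟩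
    exact Subfield.subset_closure ⟨g⁻¹, (hχ g).symm⟩
  exact hle hz

lemma conj_deletedChar {G X : Type*} [Group G] [Finite G] [MulAction G X] (lam : G →* ℂˣ) (g : G) :
    conj (deletedChar X lam g) = deletedChar X lam g⁻¹ := by
  rw [deletedChar, deletedChar, fixedBy_inv, map_mul, map_sub, map_natCast, map_one, map_inv,
    Units.val_inv_eq_inv_val, conj_apply_eq_inv]

theorem IsSimplexSystem.exists_gram_eq {G X ι : Type*} [Group G] [MulAction G X] [Fintype X]
    [DecidableEq X] [Nontrivial X] [IsMultiplyPretransitive G X 2] [Fintype ι]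
    {R : Representation ℂ G (ι → ℂ)} {w : X → ι → ℂ} (hw : IsSimplexSystem R w) {H : Matrix ι ι ℂ}
    (hH : H.IsHermitian) (hRH : ∀ g u v, star (R g u) ⬝ᵥ H *ᵥ R g v = star u ⬝ᵥ H *ᵥ v)
    {L : Subfield ℂ} (hL : ∀ z ∈ L, conj z ∈ L) (hwL : ∀ x i, w x i ∈ L) (hHL : ∀ i j, H i j ∈ L) :
    ∃ b ∈ L, conj b = b ∧ ∀ x y, star (w x) ⬝ᵥ H *ᵥ w y =
      b * (1 - if x = y then (Fintype.card X : ℂ) else 0) := by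
  obtain ⟨x₀, y₀, hb⟩ := exists_eq_mul_of_smul_invariant (G := G)
    (Γ := fun x y => star (w x) ⬝ᵥ H *ᵥ w y)
    (fun g x y => by rw [← hw.apply_eq, ← hw.apply_eq, hRH])
    (fun x => by rw [← dotProduct_sum, ← mulVec_sum, hw.sum_eq_zero, mulVec_zero, dotProduct_zero])
  refine ⟨_, ?_, ?_, hb⟩
  · exact sum_mem fun i _ => mul_mem (hL _ (hwL x₀ i))
      (sum_mem fun j _ => mul_mem (hHL i j) (hwL y₀ j))
  · calc conj (star (w x₀) ⬝ᵥ H *ᵥ w y₀)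
        = star (w y₀) ⬝ᵥ H *ᵥ w x₀ := by
          rw [starRingEnd_apply, ← star_dotProduct_star, star_star, star_mulVec, hH.eq,
            ← dotProduct_mulVec]
      _ = star (w x₀) ⬝ᵥ H *ᵥ w y₀ := by
          rw [hb y₀ x₀, if_congr (eq_comm (a := y₀)) rfl rfl]
          exact (hb x₀ y₀).symm

theorem exists_det_eq_mul_norm_of_gram_eq {ι : Type*} [Fintype ι] [DecidableEq ι]
    (hι : Even (Fintype.card ι)) {L : Subfield ℂ} {P H : Matrix ι ι ℂ} (hPL : ∀ i j, P i j ∈ L)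
    (hP : P.det ≠ 0) (hH : H.det ≠ 0) {b : ℂ} (hbL : b ∈ L) (hb : conj b = b)
    (hgram : Pᴴ * H * P =
      b • of fun i j => 1 - if i = j then (Fintype.card ι + 1 : ℂ) else 0) :
    ∃ z ∈ L, z ≠ 0 ∧ H.det = (Fintype.card ι + 1) * (z * conj z) := by
  obtain ⟨m, hm⟩ := hι
  set c : ℂ := Fintype.card ι + 1 with hc
  have hc0 : c ≠ 0 := Nat.cast_add_one_ne_zero _
  have hcL : c ∈ L := add_mem (natCast_mem L _) (one_mem L)
  have hcc : conj c = c := by rw [hc, map_add, map_natCast, map_one]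
  have hP' : conj P.det ≠ 0 := (map_ne_zero _).mpr hP
  have hdet : c * (conj P.det * H.det * P.det) = (b ^ m * c ^ m) ^ 2 := by
    have hD := mul_det_one_sub_diagonal (ι := ι) hc0
    rw [hc, add_sub_cancel_left, mul_one, ← hc, Even.neg_pow ⟨m, hm⟩] at hD
    have := congrArg det hgram
    rw [det_mul, det_mul, det_conjTranspose, det_smul, ← starRingEnd_apply] at this
    rw [this, mul_left_comm, hD, hm]
    ring
  have hb0 : b ^ m * c ^ m ≠ 0 := by
    rw [← pow_ne_zero_iff two_ne_zero, ← hdet]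
    exact mul_ne_zero hc0 (mul_ne_zero (mul_ne_zero hP' hH) hP)
  refine ⟨b ^ m * c ^ m / (c * P.det), ?_, div_ne_zero hb0 (mul_ne_zero hc0 hP), ?_⟩
  · exact div_mem (mul_mem (pow_mem hbL m) (pow_mem hcL m)) (mul_mem hcL (det_mem hPL))
  · simp only [map_div₀, map_mul, map_pow, hb, hcc]
    field_simp
    linear_combination hdet

theorem IsSimplexSystem.exists_det_eq_mul_norm {G X ι : Type*} [Group G] [Finite G]
    [MulAction G X] [Fintype X] [Nontrivial X] [IsMultiplyPretransitive G X 2]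
    [Fintype ι] [DecidableEq ι]
    {R : Representation ℂ G (ι → ℂ)} {w : X → ι → ℂ} (hw : IsSimplexSystem R w) (h0 : w ≠ 0)
    {H : Matrix ι ι ℂ} (hH : H.IsHermitian) (hdet : H.det ≠ 0)
    (hRH : ∀ g u v, star (R g u) ⬝ᵥ H *ᵥ R g v = star u ⬝ᵥ H *ᵥ v)
    {L : Subfield ℂ} (hL : ∀ z ∈ L, conj z ∈ L) (hwL : ∀ x i, w x i ∈ L) (hHL : ∀ i j, H i j ∈ L)
    (hι : Even (Fintype.card ι)) (hX : Fintype.card X = Fintype.card ι + 1) :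
    ∃ z ∈ L, z ≠ 0 ∧ H.det = (Fintype.card ι + 1) * (z * conj z) := by
  classical
  obtain ⟨b, hbL, hb, hgram⟩ := hw.exists_gram_eq hH hRH hL hwL hHL
  let x₀ := Classical.arbitrary X
  let e : ι ≃ {x // x ≠ x₀} := Fintype.equivOfCardEq (by simp [Fintype.card_subtype_compl, hX])
  let P : Matrix ι ι ℂ := of fun i a => w (e a) i
  have hP : IsUnit P := linearIndependent_cols_iff_isUnit.mp <|
    (hw.linearIndependent h0 x₀).comp e e.injective
  refine exists_det_eq_mul_norm_of_gram_eq hι (P := P) (fun i a => hwL _ _)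
    ((isUnit_iff_isUnit_det P).mp hP).ne_zero hdet hbL hb ?_
  ext i j
  rw [Matrix.mul_assoc]
  refine (hgram (e i) (e j)).trans ?_
  rw [hX, Nat.cast_succ, Matrix.smul_apply, of_apply, smul_eq_mul]
  simp only [← Subtype.ext_iff, e.injective.eq_iff]

lemma neg_one_pow_mul_pred_div_two {A : Type*} [Ring A] {n : ℕ} (hn : Even n) :
    (-1 : A) ^ (n * (n - 1) / 2) = (-1) ^ (n / 2) := by
  obtain ⟨m, rfl⟩ := hn
  obtain rfl | hm := Nat.eq_zero_or_pos m
  · rfl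
  have hdiv : (m + m) * (m + m - 1) / 2 = m * (m + m - 1) := by
    rw [← two_mul, Nat.mul_assoc, Nat.mul_div_cancel_left _ two_pos]
  have hodd : Odd (m + m - 1) := ⟨m - 1, by omega⟩
  rw [hdiv, mul_comm, pow_mul, hodd.neg_one_pow, ← two_mul, Nat.mul_div_cancel_left _ two_pos]

lemma star_twist_matrixRep_dotProduct {G : Type} [Group G] [Finite G] {n : ℕ} (lam : G →* ℂˣ)
    {ρ : G →* GL (Fin n) ℂ} {H : Matrix (Fin n) (Fin n) ℂ} {g : G}
    (hH : (ρ g : Matrix (Fin n) (Fin n) ℂ)ᴴ * H * (ρ g : Matrix (Fin n) (Fin n) ℂ) = H)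
    (u v : Fin n → ℂ) :
    star (twist lam (matrixRep ρ) g u) ⬝ᵥ H *ᵥ twist lam (matrixRep ρ) g v =
      star u ⬝ᵥ H *ᵥ v := by
  have hnorm : (lam g : ℂ) * star (lam g : ℂ) = 1 := by
    rw [← starRingEnd_apply, conj_apply_eq_inv, mul_inv_cancel₀ (lam g).ne_zero]
  simp only [twist_apply, matrixRep_apply, star_smul, smul_dotProduct, mulVec_smul, dotProduct_smul,
    smul_smul, hnorm, one_smul]
  conv_rhs => rw [← hH]
  rw [star_mulVec, ← dotProduct_mulVec, mulVec_mulVec, mulVec_mulVec, Matrix.mul_assoc]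

theorem hasUnitaryDisc_deletedChar {G : Type} {X : Type*} [Group G] [Finite G] [MulAction G X]
    [Finite X] [Nontrivial X] [IsMultiplyPretransitive G X 2] {lam : G →* ℂˣ}
    (hlam : ∀ g, (lam g : ℂ) ∈ charField (deletedChar X lam)) {n : ℕ} (hn : Even n)
    (hX : Nat.card X = n + 1) :
    HasUnitaryDisc (deletedChar X lam) ((-1) ^ (n / 2) * (n + 1)) := by
  classical
  have := Fintype.ofFinite G
  have := Fintype.ofFinite X
  have := isPretransitive_of_is_two_pretransitive (G := G) (α := X)
  intro N ρ hρ hρL H hHL hdet hH hinv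
  obtain rfl : N = n := by
    have := congrFun hρ 1
    rw [deletedChar_one, hX, charOf_eq_character, Representation.char_one,
      Module.finrank_fin_fun, Nat.cast_succ, add_sub_cancel_right] at this
    exact (Nat.cast_injective this).symm
  let R := twist lam⁻¹ (matrixRep ρ)
  have hR (g : G) : R.character g = Nat.card (fixedBy X g) - 1 := by
    rw [character_twist, ← charOf_eq_character, ← hρ, deletedChar, MonoidHom.inv_apply,
      Units.inv_mul_cancel_left]
  obtain ⟨j, hj⟩ := exists_orbitSum_ne_zero (Pi.basisFun ℂ (Fin N)) hR (Classical.arbitrary X)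
  have hw := isSimplexSystem_orbitSum (invariants_eq_bot_of_character_eq hR) (Classical.arbitrary X)
    (Pi.basisFun ℂ (Fin N) j)
  have hwL (x : X) (i : Fin N) :
      orbitSum R (Classical.arbitrary X) (Pi.basisFun ℂ (Fin N) j) x i ∈
        charField (deletedChar X lam) := by
    rw [orbitSum, Finset.sum_apply]
    refine sum_mem fun g _ => ?_
    rw [twist_apply, matrixRep_apply, Pi.basisFun_apply, mulVec_single_one, MonoidHom.inv_apply,
      Units.val_inv_eq_inv_val]
    exact mul_mem (inv_mem (hlam g)) (hρL g i j)
  obtain ⟨z, hzL, hz0, hz⟩ := hw.exists_det_eq_mul_norm hj hH hdet.ne_zero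
    (fun g => star_twist_matrixRep_dotProduct _ (hinv g))
    (fun z => conj_mem_charField (conj_deletedChar lam)) hwL hHL (by rwa [Fintype.card_fin])
    (by rwa [Fintype.card_fin, ← Nat.card_eq_fintype_card])
  refine ⟨z, hzL, hz0, ?_⟩
  rw [hz, Fintype.card_fin, neg_one_pow_mul_pred_div_two hn, mul_assoc]

end UnitaryDiscriminant

section GL2

open Matrix.GeneralLinearGroup

variable {F : Type*} [Field F]

/-- The diagonal matrices of `GL₂`, parametrized by their pairs of diagonal entries. -/
def torus : Fˣ × Fˣ →* GL (Fin 2) F where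
  toFun t := ⟨!![(t.1 : F), 0; 0, (t.2 : F)], !![(t.1⁻¹ : F), 0; 0, (t.2⁻¹ : F)],
    by simp [one_fin_two], by simp [one_fin_two]⟩
  map_one' := by ext : 1; simp [one_fin_two]
  map_mul' s t := by ext : 1; simp

/-- The permutation matrix of the transposition in `GL₂`. -/
def weyl (F : Type*) [Field F] : GL (Fin 2) F :=
  ⟨!![0, 1; 1, 0], !![0, 1; 1, 0], by simp [one_fin_two], by simp [one_fin_two]⟩

lemma coe_torus (t : Fˣ × Fˣ) :
    (torus t : Matrix (Fin 2) (Fin 2) F) = !![(t.1 : F), 0; 0, (t.2 : F)] := rfl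

lemma coe_weyl : (weyl F : Matrix (Fin 2) (Fin 2) F) = !![0, 1; 1, 0] := rfl

lemma det_torus (t : Fˣ × Fˣ) : det (torus t) = t.1 * t.2 :=
  Units.ext (by simp [coe_torus])

lemma det_upperRightHom (x : F) : det (upperRightHom x) = 1 :=
  Units.ext (by simp)

lemma torus_mul_upperRightHom (t : Fˣ × Fˣ) (x : F) :
    torus t * upperRightHom x = upperRightHom (t.1 * x / t.2) * torus t := by
  ext : 1
  simp [coe_torus]

lemma upperRightHom_eq_conj (x : Fˣ) :
    upperRightHom (x : F) = torus (x, 1) * upperRightHom 1 * (torus (x, 1))⁻¹ := by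
  rw [torus_mul_upperRightHom, mul_inv_cancel_right]
  simp only [mul_one, Units.val_one, div_one]

lemma weyl_mul_weyl : weyl F * weyl F = 1 := by
  ext : 1
  simp [coe_weyl, one_fin_two]

lemma weyl_mul_torus_mul_weyl (t : Fˣ × Fˣ) : weyl F * torus t * (weyl F)⁻¹ = torus t.swap := by
  rw [mul_inv_eq_iff_eq_mul]
  ext : 1
  simp [coe_weyl, coe_torus]

lemma weyl_eq_of_charP_two [CharP F 2] :
    weyl F = upperRightHom 1 * (weyl F * upperRightHom 1 * weyl F) * upperRightHom 1 := by
  ext : 1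
  simp [coe_weyl, CharTwo.add_self_eq_zero]

lemma torus_mul_upperRightHom_eq_conj {t : Fˣ × Fˣ} (ht : t.1 ≠ t.2) (x : F) :
    torus t * upperRightHom x = upperRightHom (t.1 * x / (t.2 - t.1)) * torus t *
      (upperRightHom (t.1 * x / (t.2 - t.1)))⁻¹ := by
  have hsub : (t.2 - t.1 : F) ≠ 0 := sub_ne_zero.mpr fun h => ht (Units.ext h.symm)
  rw [eq_mul_inv_iff_mul_eq, mul_assoc, ← AddChar.map_add_eq_mul, torus_mul_upperRightHom]
  congr 2
  field_simp
  ring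

lemma exists_eq_upperRightHom_mul_torus {g : GL (Fin 2) F} (hg : g 1 0 = 0) :
    ∃ x t, g = upperRightHom x * torus t := by
  have hdet := g.det_ne_zero
  rw [det_fin_two, hg, mul_zero, sub_zero] at hdet
  refine ⟨g 0 1 / g 1 1, (Units.mk0 _ (left_ne_zero_of_mul hdet),
    Units.mk0 _ (right_ne_zero_of_mul hdet)), ?_⟩
  ext i j
  fin_cases i <;> fin_cases j <;> simp [coe_torus, hg, right_ne_zero_of_mul hdet]

theorem exists_eq_upperRightHom_mul_torus_mul_weyl {g : GL (Fin 2) F} (hg : g 1 0 ≠ 0) :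
    ∃ x t y, g = upperRightHom x * torus t * weyl F * upperRightHom y := by
  have hentry : g 0 0 * (g 1 1 / g 1 0) + (g 0 1 * g 1 0 - g 0 0 * g 1 1) / g 1 0 = g 0 1 := by
    field_simp
    ring
  refine ⟨g 0 0 / g 1 0, (-det g / Units.mk0 _ hg, Units.mk0 _ hg), g 1 1 / g 1 0, ?_⟩
  ext i j
  fin_cases i <;> fin_cases j <;>
    simp [coe_torus, coe_weyl, hg, det_fin_two, mul_div_cancel₀, hentry]

section OnePoint

open OnePoint MulAction

variable [DecidableEq F]

lemma torus_diag_smul (s : Fˣ) (x : OnePoint F) : torus (s, s) • x = x := by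
  induction x using OnePoint.rec with
  | infty => exact smul_infty_eq_self_iff.mpr (by simp [coe_torus])
  | coe x => simp [smul_some_eq_ite, coe_torus]

lemma exists_smul_infty_eq_smul_zero_eq {x y : OnePoint F} (hxy : x ≠ y) :
    ∃ g : GL (Fin 2) F, g • (∞ : OnePoint F) = x ∧ g • ((0 : F) : OnePoint F) = y := by
  induction x using OnePoint.rec with
  | infty =>
    induction y using OnePoint.rec with
    | infty => exact absurd rfl hxy
    | coe b => exact ⟨upperRightHom b, by simp [smul_infty_eq_ite, smul_some_eq_ite]⟩
  | coe a =>
    induction y using OnePoint.rec with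
    | infty =>
      exact ⟨mkOfDetNeZero !![a, 1; 1, 0] (by simp),
        by simp [smul_infty_eq_ite, smul_some_eq_ite, mkOfDetNeZero]⟩
    | coe b =>
      have hab : a - b ≠ 0 := sub_ne_zero.mpr fun h => hxy (congrArg _ h)
      exact ⟨mkOfDetNeZero !![a, b; 1, 1] (by simpa using hab),
        by simp [smul_infty_eq_ite, smul_some_eq_ite, mkOfDetNeZero]⟩

instance isMultiplyPretransitive_onePoint :
    IsMultiplyPretransitive (GL (Fin 2) F) (OnePoint F) 2 :=
  is_two_pretransitive_iff.mpr fun {a b c d} hab hcd => by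
    obtain ⟨g, rfl, rfl⟩ := exists_smul_infty_eq_smul_zero_eq hab
    obtain ⟨h, rfl, rfl⟩ := exists_smul_infty_eq_smul_zero_eq hcd
    exact ⟨h * g⁻¹, by simp only [mul_smul, inv_smul_smul, and_self]⟩

end OnePoint
end GL2

section Trace

open Module

variable {k V : Type*} [Field k] [AddCommGroup V] [Module k V]

theorem sum_trace_mul_eq [FiniteDimensional k V] [CharZero k] {U : Type*} [Group U] [Fintype U]
    (S : Representation k U V) {T : V →ₗ[k] V} {c : k} (hT : ∀ v ∈ S.invariants, T v = c • v) :
    ∑ u, LinearMap.trace k V (T * S u) = Fintype.card U * (c * finrank k S.invariants) := by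
  have hU : (Fintype.card U : k) ≠ 0 := Nat.cast_ne_zero.mpr Fintype.card_ne_zero
  have := invertibleOfNonzero hU
  have hTe : T * S.averageMap = c • S.averageMap :=
    LinearMap.ext fun v => hT _ (S.averageMap_invariant v)
  have htr := congrArg (LinearMap.trace k V) hTe
  rw [map_smul, S.isProj_averageMap.trace, smul_eq_mul] at htr
  rw [← htr, Representation.averageMap, GroupAlgebra.average]
  simp [map_sum, Finset.mul_sum, hU]

theorem exists_trace_eq_intCast [FiniteDimensional k V] [CharZero k] {T : V →ₗ[k] V}
    (hT : T * T = 1) :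
    ∃ t : ℤ, LinearMap.trace k V T = t ∧ (|t| < finrank k V ∨ ∃ c : k, T = c • 1) := by
  let p : V →ₗ[k] V := (2⁻¹ : k) • (1 + T)
  have hTp : T = (2 : k) • p - 1 := by
    rw [smul_inv_smul₀ two_ne_zero, add_sub_cancel_left]
  have hp : IsIdempotentElem p := by
    simp only [IsIdempotentElem, p, smul_mul_smul_comm, mul_add, add_mul, hT, one_mul, mul_one]
    module
  have hproj := LinearMap.IsIdempotentElem.isProj_range p hp
  refine ⟨2 * finrank k (LinearMap.range p) - finrank k V, ?_, ?_⟩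
  · rw [hTp, map_sub, map_smul, hproj.trace, LinearMap.trace_one]
    simp
  have hle := Submodule.finrank_le (LinearMap.range p)
  by_cases h0 : finrank k (LinearMap.range p) = 0
  · rw [Submodule.finrank_eq_zero, LinearMap.range_eq_bot] at h0
    exact .inr ⟨-1, by rw [hTp, h0]; module⟩
  by_cases h1 : finrank k (LinearMap.range p) = finrank k V
  · have htop := Submodule.eq_top_of_finrank_eq h1
    have hp1 : p = 1 := LinearMap.ext fun v => hproj.map_id v (htop ▸ Submodule.mem_top)
    exact .inr ⟨1, by rw [hTp, hp1]; module⟩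
  · exact .inl (abs_lt.mpr ⟨by omega, by omega⟩)

end Trace

section Schur

open Module

variable {G k V : Type*} [Group G] [Field k] [IsAlgClosed k] [AddCommGroup V] [Module k V]
  [FiniteDimensional k V] {R : Representation k G V}

theorem finrank_eq_one_of_commute (hR : R.IsIrreducible) (hcomm : ∀ g h, Commute (R g) (R h)) :
    finrank k V = 1 := by
  have hV : Nontrivial V := (isIrreducible_iff.mp hR).1
  obtain ⟨v, hv⟩ := exists_ne (0 : V)
  have schur :=
    Representation.IsIrreducible.algebraMap_intertwiningMap_bijective_of_isAlgClosed (ρ := R)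
  refine finrank_eq_one_of_apply_mem_span hR hv fun g => ?_
  obtain ⟨c, hc⟩ := schur.2 ⟨R g, fun h => (hcomm g h).eq⟩
  exact Submodule.mem_span_singleton.mpr
    ⟨c, congrArg (fun f : R.IntertwiningMap R => f v) hc⟩

end Schur

section UnipotentRes

open Module Matrix.GeneralLinearGroup

variable {F k V : Type*} [Field F] [Field k] [AddCommGroup V] [Module k V]
  {R : Representation k (GL (Fin 2) F) V}

/-- The restriction of a representation of `GL₂(F)` to the upper unitriangular matrices, a group
isomorphic to the additive group of `F`. -/
def unipotentRes (R : Representation k (GL (Fin 2) F) V) : Representation k (Multiplicative F) V :=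
  R.comp upperRightHom.toMonoidHom

lemma mem_invariants_unipotentRes {v : V} :
    v ∈ (unipotentRes R).invariants ↔ ∀ x : F, R (upperRightHom x) v = v := Iff.rfl

lemma apply_torus_mem_invariants {v : V} (hv : v ∈ (unipotentRes R).invariants) (t : Fˣ × Fˣ) :
    R (torus t) v ∈ (unipotentRes R).invariants := by
  rw [mem_invariants_unipotentRes] at hv ⊢
  intro x
  have hcomm : upperRightHom x * torus t = torus t * upperRightHom (t.2 * x / t.1) := by
    rw [torus_mul_upperRightHom]
    congr 2
    field_simp
  rw [← Module.End.mul_apply, ← map_mul, hcomm, map_mul, Module.End.mul_apply, hv]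

lemma sum_trace_mul_upperRightHom [FiniteDimensional k V] [CharZero k] [Fintype F]
    {T : V →ₗ[k] V} {c : k} (hT : ∀ v ∈ (unipotentRes R).invariants, T v = c • v) :
    ∑ x : F, LinearMap.trace k V (T * R (upperRightHom x)) =
      Fintype.card F * (c * finrank k (unipotentRes R).invariants) := by
  rw [← Fintype.card_multiplicative F, ← sum_trace_mul_eq (unipotentRes R) hT]
  exact Fintype.sum_equiv Multiplicative.ofAdd _ _ fun _ => rfl

lemma character_torus [FiniteDimensional k V] [CharZero k] [Finite F] {t : Fˣ × Fˣ}
    (ht : t.1 ≠ t.2) {c : k} (hc : ∀ v ∈ (unipotentRes R).invariants, R (torus t) v = c • v) :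
    R.character (torus t) = c * finrank k (unipotentRes R).invariants := by
  have := Fintype.ofFinite F
  have hF : (Fintype.card F : k) ≠ 0 := Nat.cast_ne_zero.mpr Fintype.card_ne_zero
  have htrace (x : F) :
      LinearMap.trace k V (R (torus t) * R (upperRightHom x)) = R.character (torus t) := by
    rw [← map_mul, torus_mul_upperRightHom_eq_conj ht]
    exact R.char_conj _ _
  have hsum := sum_trace_mul_upperRightHom hc
  simp only [htrace, Finset.sum_const, Finset.card_univ, nsmul_eq_mul] at hsum
  exact mul_left_cancel₀ hF hsum

theorem exists_apply_eq_det_smul [FiniteDimensional k V] [CharZero k] [Finite F]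
    (h1 : finrank k (unipotentRes R).invariants = 1) :
    ∃ lam : Fˣ →* kˣ, ∃ v ≠ 0, ∀ b : GL (Fin 2) F, b 1 0 = 0 → R b v = (lam (det b) : k) • v := by
  obtain ⟨v, hv0, hspan⟩ := finrank_eq_one_iff'.mp h1
  replace hv0 : (v : V) ≠ 0 := fun h => hv0 (Subtype.ext h)
  have hline {w : V} (hw : w ∈ (unipotentRes R).invariants) : ∃ a : k, a • (v : V) = w :=
    (hspan ⟨w, hw⟩).imp fun _ ha => congrArg Subtype.val ha
  obtain ⟨mu, hmu⟩ : ∃ mu : Fˣ × Fˣ →* kˣ, ∀ t, R (torus t) v = (mu t : k) • (v : V) :=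
    exists_monoidHom_apply_eq_smul (R := R.comp torus) hv0 fun t =>
      Submodule.mem_span_singleton.mpr (hline (apply_torus_mem_invariants v.2 t))
  have hchar {t : Fˣ × Fˣ} (ht : t.1 ≠ t.2) : R.character (torus t) = mu t := by
    rw [character_torus ht (c := (mu t : k)), h1, Nat.cast_one, mul_one]
    intro w hw
    obtain ⟨a, rfl⟩ := hline hw
    rw [map_smul, hmu, smul_comm]
  have hswap (t : Fˣ × Fˣ) : mu t.swap = mu t := by
    by_cases ht : t.1 = t.2
    · rw [show t.swap = t from Prod.ext ht.symm ht]
    · apply Units.ext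
      rw [← hchar ht, ← hchar (t := t.swap) (Ne.symm ht), ← weyl_mul_torus_mul_weyl, R.char_conj]
  have hdet (t : Fˣ × Fˣ) : mu (t.1 * t.2, 1) = mu t := by
    rw [show (t.1 * t.2, (1 : Fˣ)) = (t.1, 1) * (t.2, 1) by simp, map_mul, ← hswap (t.2, 1),
      ← map_mul]
    simp
  refine ⟨mu.comp (MonoidHom.inl _ _), v, hv0, fun b hb => ?_⟩
  obtain ⟨x, t, rfl⟩ := exists_eq_upperRightHom_mul_torus hb
  rw [map_mul, Module.End.mul_apply, hmu, map_smul, mem_invariants_unipotentRes.mp v.2, map_mul,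
    det_upperRightHom, det_torus, one_mul]
  exact congrArg (fun u : kˣ => (u : k) • (v : V)) (hdet t).symm

lemma eq_one_of_add_pred_mul_eq {q t a : ℤ} (hq : q ≠ 0) (ht : |t| < q)
    (h : q + (q - 1) * t = q * a) : a = 1 := by
  have ht0 : t = 0 := Int.eq_zero_of_abs_lt_dvd ⟨1 + t - a, by linear_combination -h⟩ ht
  rw [ht0, mul_zero, add_zero] at h
  exact mul_left_cancel₀ hq (h.symm.trans (mul_one q).symm)

section CharTwo

variable [CharP F 2]

theorem finrank_eq_one_of_apply_upperRightHom [IsAlgClosed k] [FiniteDimensional k V]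
    (hR : R.IsIrreducible) {c : k} (hc : R (upperRightHom 1) = c • 1) : finrank k V = 1 := by
  have hup (x : F) : ∃ a : k, R (upperRightHom x) = a • 1 := by
    obtain rfl | hx := eq_or_ne x 0
    · exact ⟨1, by simp⟩
    · refine ⟨c, ?_⟩
      rw [← Units.val_mk0 hx, upperRightHom_eq_conj, map_mul, map_mul, hc, mul_smul_comm, mul_one,
        smul_mul_assoc, ← map_mul, mul_inv_cancel, map_one]
  have hweyl : R (weyl F) = (c * c * c) • 1 := by
    rw [weyl_eq_of_charP_two]
    simp only [map_mul, hc, mul_smul_comm, smul_mul_assoc, mul_one, one_mul, smul_smul, mul_assoc]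
    rw [← map_mul, weyl_mul_weyl, map_one]
  have hform (g : GL (Fin 2) F) : ∃ (a : k) (t : Fˣ × Fˣ), R g = a • R (torus t) := by
    by_cases hg : g 1 0 = 0
    · obtain ⟨x, t, rfl⟩ := exists_eq_upperRightHom_mul_torus hg
      obtain ⟨a, ha⟩ := hup x
      exact ⟨a, t, by rw [map_mul, ha, smul_mul_assoc, one_mul]⟩
    · obtain ⟨x, t, y, rfl⟩ := exists_eq_upperRightHom_mul_torus_mul_weyl hg
      obtain ⟨a, ha⟩ := hup x
      obtain ⟨b, hb⟩ := hup y
      refine ⟨b * (c * c * c * a), t, ?_⟩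
      simp only [map_mul, ha, hb, hweyl, mul_smul_comm, smul_mul_assoc, mul_one, one_mul, smul_smul]
  refine finrank_eq_one_of_commute hR fun g h => ?_
  obtain ⟨a, s, ha⟩ := hform g
  obtain ⟨b, t, hb⟩ := hform h
  rw [ha, hb]
  exact (((Commute.all s t).map torus).map R).smul_left a |>.smul_right b

theorem finrank_invariants_unipotentRes [IsAlgClosed k] [CharZero k] [Finite F]
    (hR : R.IsIrreducible) (hV : finrank k V = Nat.card F) :
    finrank k (unipotentRes R).invariants = 1 := by
  classical
  have := Fintype.ofFinite F
  rw [Nat.card_eq_fintype_card] at hV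
  have hq : 1 < Fintype.card F := Fintype.one_lt_card
  have : FiniteDimensional k V := FiniteDimensional.of_finrank_pos (by omega)
  have hinv : R (upperRightHom 1) * R (upperRightHom 1) = 1 := by
    rw [← map_mul, ← AddChar.map_add_eq_mul, CharTwo.add_self_eq_zero, AddChar.map_zero_eq_one,
      map_one]
  obtain ⟨t, ht, habs | ⟨c, hc⟩⟩ := exists_trace_eq_intCast hinv
  swap
  · have := finrank_eq_one_of_apply_upperRightHom hR hc
    omega
  have hconj (x : F) (hx : x ≠ 0) : LinearMap.trace k V (R (upperRightHom x)) = t := by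
    rw [← ht, ← Units.val_mk0 hx, upperRightHom_eq_conj]
    exact R.char_conj _ _
  have hsum := sum_trace_mul_upperRightHom (R := R) (T := 1) (c := 1) fun v _ => (one_smul k v).symm
  simp only [one_mul] at hsum
  rw [← Finset.add_sum_erase _ _ (Finset.mem_univ (0 : F)),
    Finset.sum_congr rfl fun x hx => hconj x (Finset.ne_of_mem_erase hx), Finset.sum_const,
    Finset.card_erase_of_mem (Finset.mem_univ _), Finset.card_univ, AddChar.map_zero_eq_one,
    map_one, LinearMap.trace_one, hV, nsmul_eq_mul, Nat.cast_pred Fintype.card_pos] at hsum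
  have hint : (Fintype.card F : ℤ) + (Fintype.card F - 1) * t =
      Fintype.card F * finrank k (unipotentRes R).invariants := by
    exact_mod_cast hsum
  have ha := eq_one_of_add_pred_mul_eq (by omega) (hV ▸ habs) hint
  exact_mod_cast ha

end CharTwo
end UnipotentRes

section Steinberg

open Module OnePoint MulAction Matrix.GeneralLinearGroup

variable {F : Type} [Field F]

instance finite_onePoint (X : Type*) [Finite X] : Finite (OnePoint X) :=
  inferInstanceAs (Finite (Option X))

instance nontrivial_onePoint (X : Type*) [Nonempty X] : Nontrivial (OnePoint X) :=
  inferInstanceAs (Nontrivial (Option X))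

lemma natCard_onePoint (X : Type*) [Finite X] : Nat.card (OnePoint X) = Nat.card X + 1 :=
  Finite.card_option

section DecidableEq

variable [DecidableEq F]

/-- The Steinberg character of `GL₂(F)`, twisted by the linear character `lam ∘ det`. -/
def steinbergChar (lam : Fˣ →* ℂˣ) : GL (Fin 2) F → ℂ :=
  deletedChar (OnePoint F) (lam.comp det)

variable [Finite F]

lemma steinbergChar_one (lam : Fˣ →* ℂˣ) : steinbergChar lam 1 = Nat.card F := by
  rw [steinbergChar, deletedChar_one, natCard_onePoint, Nat.cast_succ, add_sub_cancel_right]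

lemma steinbergChar_torus_diag (lam : Fˣ →* ℂˣ) (s : Fˣ) :
    steinbergChar lam (torus (s, s)) = lam (s * s) * Nat.card F := by
  rw [steinbergChar, deletedChar_of_forall_smul_eq _ (torus_diag_smul s), natCard_onePoint,
    MonoidHom.comp_apply, det_torus, Nat.cast_succ, add_sub_cancel_right]

lemma isIrrChar_steinbergChar (lam : Fˣ →* ℂˣ) : IsIrrChar (steinbergChar lam) :=
  isIrrChar_deletedChar _

variable [CharP F 2]

theorem exists_charOf_eq_steinbergChar {n : ℕ} {ρ : GL (Fin 2) F →* GL (Fin n) ℂ}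
    (hρ : IsIrredRep ρ) (hn : n = Nat.card F) : ∃ lam, charOf ρ = steinbergChar lam := by
  rw [isIrredRep_iff] at hρ
  obtain ⟨lam, v, hv0, hv⟩ := exists_apply_eq_det_smul
    (finrank_invariants_unipotentRes hρ (by rw [finrank_fin_fun, hn]))
  have hirr := isIrreducible_twist (lam.comp det)⁻¹ hρ
  have hn1 : n ≠ 1 := hn ▸ Finite.one_lt_card.ne'
  have hinv := invariants_eq_bot hirr (by rwa [finrank_fin_fun])
  have hfix (b : GL (Fin 2) F) (hb : b • (∞ : OnePoint F) = ∞) :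
      twist (lam.comp det)⁻¹ (matrixRep ρ) b v = v := by
    rw [twist_apply, hv b (smul_infty_eq_self_iff.mp hb), smul_smul]
    simp
  refine ⟨lam, funext fun g => ?_⟩
  have hchar := character_eq_of_apply_eq_self hirr hinv hv0 hfix g
  rw [charOf_eq_character, steinbergChar, deletedChar, ← hchar, character_twist]
  simp

theorem isIrrChar_and_apply_one_eq_iff {ψ : GL (Fin 2) F → ℂ} :
    IsIrrChar ψ ∧ ψ 1 = Nat.card F ↔ ∃ lam, steinbergChar lam = ψ := by
  constructor
  · rintro ⟨⟨n, ρ, hρ, rfl⟩, h1⟩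
    rw [charOf_eq_character, Representation.char_one, finrank_fin_fun, Nat.cast_inj] at h1
    exact (exists_charOf_eq_steinbergChar hρ h1).imp fun _ => Eq.symm
  · rintro ⟨lam, rfl⟩
    exact ⟨isIrrChar_steinbergChar lam, steinbergChar_one lam⟩

end DecidableEq

variable [Finite F] [CharP F 2]

lemma isSquare_units_of_charP_two (a : Fˣ) : IsSquare a := by
  obtain ⟨s, hs⟩ := FiniteField.isSquare_of_char_two (ringChar.eq F 2) (a : F)
  have hs0 : s ≠ 0 := fun h => a.ne_zero (by rw [hs, h, mul_zero])
  exact ⟨Units.mk0 s hs0, Units.ext hs⟩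

lemma even_natCard : Even (Nat.card F) := by
  have := Fintype.ofFinite F
  rw [Nat.card_eq_fintype_card, Nat.even_iff]
  exact FiniteField.even_card_of_char_two (ringChar.eq F 2)

variable [DecidableEq F]

lemma steinbergChar_injective : Function.Injective (steinbergChar (F := F)) := by
  intro lam mu h
  ext a
  obtain ⟨s, rfl⟩ := isSquare_units_of_charP_two a
  have hs := congrFun h (torus (s, s))
  rw [steinbergChar_torus_diag, steinbergChar_torus_diag] at hs
  exact mul_right_cancel₀ (Nat.cast_ne_zero.mpr Nat.card_pos.ne') hs

lemma apply_mem_charField_steinbergChar (lam : Fˣ →* ℂˣ) (a : Fˣ) :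
    (lam a : ℂ) ∈ charField (steinbergChar lam) := by
  obtain ⟨s, rfl⟩ := isSquare_units_of_charP_two a
  have hF : (Nat.card F : ℂ) ≠ 0 := Nat.cast_ne_zero.mpr Nat.card_pos.ne'
  rw [← mul_div_cancel_right₀ (lam (s * s) : ℂ) hF, ← steinbergChar_torus_diag]
  exact div_mem (Subfield.subset_closure ⟨_, rfl⟩) (natCast_mem _ _)

theorem hasUnitaryDisc_steinbergChar (lam : Fˣ →* ℂˣ) :
    HasUnitaryDisc (steinbergChar lam) ((-1) ^ (Nat.card F / 2) * (Nat.card F + 1)) :=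
  hasUnitaryDisc_deletedChar (fun g => apply_mem_charField_steinbergChar lam (det g))
    even_natCard (natCard_onePoint F)

end Steinberg

theorem stmt1_general (F : Type) [Field F] [Fintype F] [CharP F 2] :
    {ψ : GL (Fin 2) F → ℂ | IsIrrChar ψ ∧ ψ 1 = (Fintype.card F : ℂ)}.ncard =
      Fintype.card F - 1 ∧
    ∀ ψ : GL (Fin 2) F → ℂ, IsIrrChar ψ → ψ 1 = (Fintype.card F : ℂ) →
      HasUnitaryDisc ψ ((-1 : ℂ) ^ (Fintype.card F / 2) * ((Fintype.card F : ℂ) + 1)) := by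
  classical
  simp only [← Nat.card_eq_fintype_card]
  constructor
  · have hrange : {ψ : GL (Fin 2) F → ℂ | IsIrrChar ψ ∧ ψ 1 = (Nat.card F : ℂ)} =
        Set.range steinbergChar :=
      Set.ext fun ψ => isIrrChar_and_apply_one_eq_iff
    rw [hrange, Set.ncard_range_of_injective steinbergChar_injective,
      CommGroup.card_monoidHom_of_hasEnoughRootsOfUnity, Nat.card_units]
  · intro ψ hψ h1
    obtain ⟨lam, rfl⟩ := isIrrChar_and_apply_one_eq_iff.mp ⟨hψ, h1⟩
    exact hasUnitaryDisc_steinbergChar lam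

/-- for `q` a power of 2, `GL₂(F_q)` has exactly `q-1` irreducible
complex characters of degree `q`, and each such character with non-real character
field has unitary discriminant `(-1)^(q/2)·(q+1)`. -/
theorem stmt1 (k : ℕ) (hk : 0 < k)
    (F : Type) [Field F] [Fintype F] (hF : Fintype.card F = 2 ^ k)
    (q : ℕ) (hq : q = 2 ^ k) :
    {ψ : GL (Fin 2) F → ℂ | IsIrrChar ψ ∧ ψ 1 = (q : ℂ)}.ncard = q - 1 ∧
    ∀ ψ : GL (Fin 2) F → ℂ, IsIrrChar ψ → ψ 1 = (q : ℂ) → NotReal ψ →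
      HasUnitaryDisc ψ ((-1 : ℂ) ^ (q / 2) * ((q : ℂ) + 1)) := by
  obtain rfl : q = Fintype.card F := hq.trans hF.symm
  have : CharP F 2 := charP_of_card_eq_prime_pow hF
  exact ⟨(stmt1_general F).1, fun ψ hψ h1 _ => (stmt1_general F).2 ψ hψ h1⟩

end Paper
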